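/- Let A = k[y] and let F(x,t) = x²y + x C_1(x) t + F_2(x) t² + O(t³) be a family of polynomials with C_1, F_2 ∈ A[x] such that x does not divide C_1² − 4F_2·y, and Δ_{A[[t]]}(F) ≠ 0. Then the general type of F is τ = 2. -/

import Mathlib

open Finset Polynomial

noncomputable section

/-- The limit of a Hahn (Puiseux) series as `t → 0`: the coefficient of the lowest
power of `t` occurring in it (its leading coefficient). -/
def lim0 {L : Type*} [Field L] (f : HahnSeries ℚ L) : L := f.coeff f.order

/-- `s` is a Puiseux series with nonnegative support and constant term `a`
(i.e. `s(0) = a`). -/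
def HasConst {L : Type*} [Field L] (s : HahnSeries ℚ L) (a : L) : Prop :=
  s.coeff 0 = a ∧ ∀ q < (0 : ℚ), s.coeff q = 0

/-- The natural ring map `A[[t]] → L((t^ℚ))` induced by `φ : A →+* L`. -/
def Phi {A L : Type*} [CommRing A] [Field L] (φ : A →+* L) :
    PowerSeries A →+* HahnSeries ℚ L :=
  (HahnSeries.ofPowerSeries ℚ L).comp (PowerSeries.map φ)

/-- The polynomial with power-series coefficients determined by a family
`F(x,t) = Σ_i p_i(x) t^i` of polynomials of degree at most `n'`. -/
def fam {A : Type*} [CommRing A] (n' : ℕ) (p : ℕ → Polynomial A) :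
    Polynomial (PowerSeries A) :=
  ∑ j ∈ Finset.range (n' + 1), Polynomial.C (PowerSeries.mk fun i => (p i).coeff j) * X ^ j

/-- `∏_{q ≠ q'} (S q − S q')`, the product of the differences of all (ordered) pairs of
distinct `t`-roots.  For a monic family it equals `(-1)^(N(N-1)/2)` times the discriminant
`Δ_{A[[t]]}(F) = ∏_{q<q'} (S q − S q')²`; in particular it is nonzero iff
`Δ_{A[[t]]}(F) ≠ 0`. -/
def rootsSep {L : Type*} [Field L] {ι : Type*} [Fintype ι] [DecidableEq ι]
    (S : ι → HahnSeries ℚ L) : HahnSeries ℚ L :=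
  ∏ q ∈ Finset.univ.offDiag, (S q.1 - S q.2)

/-- `Δ(F, f_ν)(a ν ℓ, t)_0`: the limit of the generalized formal discriminant of the family
with respect to `f_ν = ∏_ℓ (x − a ν ℓ)`, evaluated at `x = a ν ℓ`.  Here the `t`-roots
approaching the roots of `f_ν` are grouped as `s ν · i` for `i` in `Fin (n ν)`; following
Definition 2.3, `s'_i(x) = f_ν(x) − ∏_ℓ (x − s ν ℓ i)`, so that
`s'_i(x) − s'_j(x) = ∏_ℓ (x − s ν ℓ j) − ∏_ℓ (x − s ν ℓ i)`, and
`Δ(F,f_ν)(x,t) = [∏_{others} (x − s_ℓ)]^(2 n ν − 2) ∏_{i<j} (s'_i − s'_j)²`. -/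
def gdlim {L : Type*} [Field L] {m : ℕ} (d n : Fin m → ℕ)
    (a : (ν : Fin m) → Fin (d ν) → L)
    (s : (ν : Fin m) → (ℓ : Fin (d ν)) → Fin (n ν) → HahnSeries ℚ L)
    (ν : Fin m) (ℓ : Fin (d ν)) : L :=
  lim0 ((∏ ν' ∈ Finset.univ.erase ν, ∏ ℓ', ∏ i', (HahnSeries.C (a ν ℓ) - s ν' ℓ' i')) ^
      (2 * n ν - 2) *
    ∏ q ∈ Finset.univ.filter (fun q : Fin (n ν) × Fin (n ν) => q.1 < q.2),
      ((∏ ℓ', (HahnSeries.C (a ν ℓ) - s ν ℓ' q.2)) -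
        ∏ ℓ', (HahnSeries.C (a ν ℓ) - s ν ℓ' q.1)) ^ 2)

/-- The discriminant `Δ(f) = ∏_{ℓ<ℓ'} (a ℓ − a ℓ')²` of a monic split polynomial
`f = ∏_ℓ (x − a ℓ)`. -/
def discOf {L : Type*} [Field L] {d : ℕ} (a : Fin d → L) : L :=
  ∏ q ∈ Finset.univ.filter (fun q : Fin d × Fin d => q.1 < q.2), (a q.1 - a q.2) ^ 2

/-- The vertex `ver(F)` of the family (Definition 3.1), computed from the root data:
`ver(F) = ∏_{ν,ℓ} Δ(F,f_ν)(a_{νℓ},t)_0 · ∏_{ν<ν'} res(f_ν,f_{ν'})^(2(n_ν+n_{ν'}−n_ν n_{ν'}))`,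
where `res(f_ν, f_{ν'}) = ∏_{ℓ,ℓ'} (a ν ℓ − a ν' ℓ')`. -/
def ver {L : Type*} [Field L] {m : ℕ} (d n : Fin m → ℕ)
    (a : (ν : Fin m) → Fin (d ν) → L)
    (s : (ν : Fin m) → (ℓ : Fin (d ν)) → Fin (n ν) → HahnSeries ℚ L) : L :=
  (∏ ν, ∏ ℓ, gdlim d n a s ν ℓ) *
    ∏ ν, ∏ ν' ∈ Finset.Ioi ν,
      (∏ ℓ, ∏ ℓ', (a ν ℓ - a ν' ℓ')) ^
        (2 * ((n ν : ℤ) + (n ν' : ℤ) - (n ν : ℤ) * (n ν' : ℤ)))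

/-!
The discriminant of `F = c (x − u) (x − v)` is `c² (u − v)²`, so `ord (u − v)` is half the `t`-order
of the discriminant minus the `t`-order of the leading coefficient `c`. The latter is `0`, since `c`
has constant term `y`. As `t` divides the linear coefficient of `F` and `t²` the constant one, `t²`
divides the discriminant, and the `t²`-coefficient of the discriminant is the value of
`C₁² − 4 F₂ y` at `x = 0`, which is nonzero.
-/

theorem order_ofPowerSeries {Γ R : Type*} [Semiring Γ] [PartialOrder Γ] [IsStrictOrderedRing Γ]
    [Semiring R] (f : PowerSeries R) :
    (HahnSeries.ofPowerSeries Γ R f).order = (f.order.toNat : Γ) := by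
  by_cases hf : f = 0
  · simp [hf]
  have hf' : HahnSeries.ofPowerSeries Γ R f ≠ 0 :=
    (map_ne_zero_iff _ HahnSeries.ofPowerSeries_injective).2 hf
  have orderTop_eq : (HahnSeries.toPowerSeries.symm f).orderTop = (f.order.toNat : ℕ) :=
    HahnSeries.orderTop_eq_of_le (PowerSeries.coeff_order hf) fun n hn =>
      ENat.toNat_le_of_le_natCast (PowerSeries.order_le n hn)
  rw [← WithTop.coe_inj, HahnSeries.order_eq_orderTop_of_ne_zero hf',
    HahnSeries.ofPowerSeries_apply, HahnSeries.orderTop_embDomain, orderTop_eq]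
  rfl

theorem order_map_of_injective {R S : Type*} [Semiring R] [Semiring S] {φ : R →+* S}
    (hφ : Function.Injective φ) (f : PowerSeries R) :
    (PowerSeries.map φ f).order = f.order := by
  have coeff_map_eq_zero_iff (n : ℕ) :
      PowerSeries.coeff n (PowerSeries.map φ f) = 0 ↔ PowerSeries.coeff n f = 0 := by
    rw [PowerSeries.coeff_map, map_eq_zero_iff φ hφ]
  simpa only [PowerSeries.order_eq, ne_eq, coeff_map_eq_zero_iff] using
    PowerSeries.order_eq.1 (rfl : f.order = f.order)

section Phi

variable {A L : Type*} [CommRing A] [Field L] {φ : A →+* L}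

theorem Phi_injective (hφ : Function.Injective φ) : Function.Injective (Phi φ) := by
  rw [Phi, RingHom.coe_comp]
  exact HahnSeries.ofPowerSeries_injective.comp (PowerSeries.map_injective φ hφ)

theorem order_Phi (hφ : Function.Injective φ) (f : PowerSeries A) :
    (Phi φ f).order = (f.order.toNat : ℚ) := by
  rw [Phi, RingHom.comp_apply, order_ofPowerSeries, order_map_of_injective hφ]

end Phi

section Discriminant

theorem map_discrim {R S : Type*} [Ring R] [Ring S] (f : R →+* S) (a b c : R) :
    f (discrim a b c) = discrim (f a) (f b) (f c) := by
  simp only [discrim, map_sub, map_mul, map_pow, map_ofNat]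

variable {R : Type*} [CommRing R]

theorem C_mul_X_sub_C_mul_X_sub_C_eq_quadratic (c u v : R) :
    C c * ((X - C u) * (X - C v)) =
      C c * X ^ 2 + C (-(c * (u + v))) * X + C (c * (u * v)) := by
  simp only [map_neg, map_mul, map_add]
  ring

theorem coeff_two_C_mul_X_sub_C_mul_X_sub_C (c u v : R) :
    (C c * ((X - C u) * (X - C v))).coeff 2 = c := by
  simp [C_mul_X_sub_C_mul_X_sub_C_eq_quadratic]

theorem discrim_coeff_of_eq_C_mul_X_sub_C_mul_X_sub_C {P : R[X]} {c u v : R}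
    (hP : P = C c * ((X - C u) * (X - C v))) :
    discrim (P.coeff 2) (P.coeff 1) (P.coeff 0) = (c * (u - v)) ^ 2 := by
  have coeff_two : P.coeff 2 = c := hP ▸ coeff_two_C_mul_X_sub_C_mul_X_sub_C c u v
  have coeff_one : P.coeff 1 = -(c * (u + v)) := by
    simp [hP, C_mul_X_sub_C_mul_X_sub_C_eq_quadratic]
  have coeff_zero : P.coeff 0 = c * (u * v) := by simp [hP]
  rw [coeff_two, coeff_one, coeff_zero, discrim]
  ring

theorem order_discrim_of_X_pow_dvd {n : ℕ} {a b c : PowerSeries R}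
    (hb : PowerSeries.X ^ n ∣ b) (hc : PowerSeries.X ^ (2 * n) ∣ c)
    (h : discrim (PowerSeries.coeff 0 a) (PowerSeries.coeff n b)
      (PowerSeries.coeff (2 * n) c) ≠ 0) :
    (discrim a b c).order = (2 * n : ℕ) := by
  obtain ⟨b, rfl⟩ := hb
  obtain ⟨c, rfl⟩ := hc
  have factor : discrim a (PowerSeries.X ^ n * b) (PowerSeries.X ^ (2 * n) * c) =
      PowerSeries.X ^ (2 * n) * discrim a b c := by
    simp only [discrim]
    ring
  rw [factor, PowerSeries.order_eq_nat]
  refine ⟨?_, fun i hi => PowerSeries.X_pow_dvd_iff.1 (dvd_mul_right _ _) i hi⟩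
  simpa [PowerSeries.coeff_X_pow_mul', map_discrim] using h

theorem discrim_coeff_zero_ne_zero_of_not_X_dvd {a : R} {P Q : R[X]}
    (h : ¬ X ∣ P ^ 2 - 4 * Q * C a) :
    discrim a (P.coeff 0) (Q.coeff 0) ≠ 0 := by
  contrapose! h
  rw [X_dvd_iff, ← h, discrim]
  simp only [coeff_zero_eq_eval_zero, eval_sub, eval_mul, eval_pow, eval_C, eval_ofNat]
  ring

end Discriminant

section Roots

variable {A L : Type*} [CommRing A] [Field L] {φ : A →+* L} {F : Polynomial (PowerSeries A)}
  {c u v : HahnSeries ℚ L}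

theorem two_mul_order_sub_roots (hφ : Function.Injective φ)
    (hF : F.map (Phi φ) = C c * ((X - C u) * (X - C v)))
    (hdiscrim : discrim (F.coeff 2) (F.coeff 1) (F.coeff 0) ≠ 0) :
    2 * (u - v).order = ((discrim (F.coeff 2) (F.coeff 1) (F.coeff 0)).order.toNat : ℚ) -
      2 * ((F.coeff 2).order.toNat : ℚ) := by
  have leading : Phi φ (F.coeff 2) = c := by
    rw [← coeff_map, hF, coeff_two_C_mul_X_sub_C_mul_X_sub_C]
  have discrim_eq : Phi φ (discrim (F.coeff 2) (F.coeff 1) (F.coeff 0)) = (c * (u - v)) ^ 2 := by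
    rw [map_discrim, ← discrim_coeff_of_eq_C_mul_X_sub_C_mul_X_sub_C hF]
    simp only [coeff_map]
  have product_ne_zero : c * (u - v) ≠ 0 := by
    rw [← pow_ne_zero_iff two_ne_zero, ← discrim_eq]
    exact (map_ne_zero_iff _ (Phi_injective hφ)).2 hdiscrim
  obtain ⟨hc, huv⟩ := mul_ne_zero_iff.1 product_ne_zero
  rw [← order_Phi hφ, ← order_Phi hφ, discrim_eq, leading, HahnSeries.order_pow,
    HahnSeries.order_mul hc huv, nsmul_eq_mul]
  push_cast
  ring

theorem order_sub_roots_of_X_pow_dvd (hφ : Function.Injective φ) {n : ℕ}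
    (hF : F.map (Phi φ) = C c * ((X - C u) * (X - C v)))
    (h₂ : PowerSeries.coeff 0 (F.coeff 2) ≠ 0)
    (h₁ : PowerSeries.X ^ n ∣ F.coeff 1) (h₀ : PowerSeries.X ^ (2 * n) ∣ F.coeff 0)
    (hdiscrim : discrim (PowerSeries.coeff 0 (F.coeff 2)) (PowerSeries.coeff n (F.coeff 1))
      (PowerSeries.coeff (2 * n) (F.coeff 0)) ≠ 0) :
    (u - v).order = n := by
  have order_leading : (F.coeff 2).order = (0 : ℕ) :=
    PowerSeries.order_eq_nat.2 ⟨h₂, by simp⟩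
  have order_discrim : (discrim (F.coeff 2) (F.coeff 1) (F.coeff 0)).order = (2 * n : ℕ) :=
    order_discrim_of_X_pow_dvd h₁ h₀ hdiscrim
  have discrim_ne_zero : discrim (F.coeff 2) (F.coeff 1) (F.coeff 0) ≠ 0 := by
    rw [← PowerSeries.order_finite_iff_ne_zero, order_discrim]
    exact ENat.natCast_lt_top _
  have two_mul_order : 2 * (u - v).order = 2 * (n : ℚ) := by
    simpa [order_leading, order_discrim] using two_mul_order_sub_roots hφ hF discrim_ne_zero
  linarith

end Roots

section Family

variable {A : Type*} [CommRing A] {n : ℕ} {p : ℕ → A[X]}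

theorem coeff_fam (hdeg : ∀ i, (p i).natDegree ≤ n) (j : ℕ) :
    (fam n p).coeff j = PowerSeries.mk fun i => (p i).coeff j := by
  rw [fam, finsetSum_coeff]
  simp only [coeff_C_mul_X_pow, Finset.sum_ite_eq, Finset.mem_range]
  split_ifs with hj
  · rfl
  · ext1 i
    rw [map_zero, PowerSeries.coeff_mk, coeff_eq_zero_of_natDegree_lt]
    exact (hdeg i).trans_lt (by omega)

theorem X_pow_dvd_coeff_fam_iff (hdeg : ∀ i, (p i).natDegree ≤ n) {j m : ℕ} :
    PowerSeries.X ^ m ∣ (fam n p).coeff j ↔ ∀ i < m, (p i).coeff j = 0 := by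
  simp only [PowerSeries.X_pow_dvd_iff, coeff_fam hdeg, PowerSeries.coeff_mk]

end Family

theorem stmt18_general {A L : Type*} [CommRing A] [Field L] {φ : A →+* L}
    (hφ : Function.Injective φ) {a : A} (ha : a ≠ 0) {C₁ F₂ : A[X]} {p : ℕ → A[X]}
    (hdeg : ∀ i, (p i).natDegree ≤ 2)
    (hp0 : p 0 = C a * X ^ 2) (hp1 : p 1 = X * C₁) (hp2 : p 2 = F₂)
    (hx : ¬ (X ∣ (C₁ ^ 2 - 4 * F₂ * C a))) {u v c : HahnSeries ℚ L}
    (hsplit : (fam 2 p).map (Phi φ) = C c * ((X - C u) * (X - C v))) :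
    (u - v).order = 1 ∧ ⌊(2 : ℚ) * (u - v).order⌋ = 2 := by
  have leading_ne_zero : PowerSeries.coeff 0 ((fam 2 p).coeff 2) ≠ 0 := by
    simpa [coeff_fam hdeg, hp0] using ha
  have X_dvd_linear : PowerSeries.X ^ 1 ∣ (fam 2 p).coeff 1 := by
    rw [X_pow_dvd_coeff_fam_iff hdeg]
    simp [hp0]
  have X_sq_dvd_constant : PowerSeries.X ^ (2 * 1) ∣ (fam 2 p).coeff 0 := by
    rw [X_pow_dvd_coeff_fam_iff hdeg]
    intro i hi
    interval_cases i <;> simp [hp0, hp1]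
  have discrim_ne_zero : discrim (PowerSeries.coeff 0 ((fam 2 p).coeff 2))
      (PowerSeries.coeff 1 ((fam 2 p).coeff 1))
      (PowerSeries.coeff (2 * 1) ((fam 2 p).coeff 0)) ≠ 0 := by
    simpa [coeff_fam hdeg, hp0, hp1, hp2] using discrim_coeff_zero_ne_zero_of_not_X_dvd hx
  have order_eq_one : (u - v).order = 1 := mod_cast order_sub_roots_of_X_pow_dvd hφ hsplit
    leading_ne_zero X_dvd_linear X_sq_dvd_constant discrim_ne_zero
  exact ⟨order_eq_one, by norm_num [order_eq_one]⟩

/-- **Example 4.9 (e).**  Let `A = k[y]` and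
`F(x,t) = x²y + x C₁(x) t + F₂(x) t² + O(t³)` with `x ∤ (C₁² − 4F₂y)` and
`Δ_{A[[t]]}(F) ≠ 0`.  Then the general type of `F` is `τ = 2`:
here `F_0 = y·x²`, so the repeated factor is `f = x` with multiplicity `2`, whose two
`t`-roots are `u, v`, and `τ = ⌊2 · ord(u − v)⌋ = 2`. -/
theorem stmt18 {k L : Type*} [Field k] [IsAlgClosed k] [CharZero k]
    [Field L] [IsAlgClosed L] [CharZero L]
    (φ : Polynomial k →+* L) (hφ : Function.Injective φ)
    (C₁ F₂ : Polynomial (Polynomial k))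
    (p : ℕ → Polynomial (Polynomial k)) (hdeg : ∀ i, (p i).natDegree ≤ 2)
    (hp0 : p 0 = C Polynomial.X * X ^ 2) (hp1 : p 1 = X * C₁) (hp2 : p 2 = F₂)
    (hx : ¬ (X ∣ (C₁ ^ 2 - 4 * F₂ * C Polynomial.X)))
    (u v : HahnSeries ℚ L) (hu : HasConst u 0) (hv : HasConst v 0)
    (c : HahnSeries ℚ L)
    (hsplit : (fam 2 p).map (Phi φ) = C c * ((X - C u) * (X - C v)))
    (hΔ : rootsSep ![u, v] ≠ 0) :
    (u - v).order = 1 ∧ ⌊(2 : ℚ) * (u - v).order⌋ = 2 :=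
  stmt18_general hφ X_ne_zero hdeg hp0 hp1 hp2 hx hsplit
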